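/- arXiv:1706.03554 — 5 statements merged into one kernel-verified Lean document; each statement's English description precedes it below -/
import Mathlib

section
/- Let κ, V : ℝ → ℝ be continuous and p : ℝ → ℝ be continuously differentiable, and set κ_p(t) := κ(t) + p'(t) + p(t)·(p(t) − V(t)). Let y : ℝ → ℝ be twice differentiable with y''(t) − V(t)·y'(t) + κ(t)·y(t) = 0 for all t, and set z(t) := y'(t) − p(t)·y(t) and Q(t) := z(t)·y(t). Then Q is differentiable with Q'(t) = z(t)² + V(t)·z(t)·y(t) − κ_p(t)·y(t)² for all t. In particular, if κ_p(t) < 0, Q(t) = 0 and (y(t), z(t)) ≠ (0,0), then Q'(t) > 0. -/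
/-!
By the product rule `Q' = z' y + z y'`. Substituting `y' = z + p y` and
`z' = y'' - p' y - p y' = (V - p) y' - (κ + p') y` (the Jacobi equation) gives
`Q' = z² + V z y - κ_p y²`. Where `z y = 0` this equals `z² - κ_p y²`, a positive
definite form in `(y, z)` when `κ_p < 0`.
-/

/-- Scalar form of the quadratic form computation underlying Theorem 3.6:
for the Jacobi equation `y'' - V y' + κ y = 0`, a gauge `p` and
`κ_p = κ + p' + p (p - V)`, the quadratic form `Q = z y` with `z = y' - p y`
satisfies `Q' = z² + V z y - κ_p y²`; in particular `Q' > 0` at non-trivial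
zeros of `Q` when `κ_p < 0`. -/
theorem stmt_0 (κ V p p' y y' y'' : ℝ → ℝ)
    (hκ : Continuous κ) (hV : Continuous V)
    (hp : ∀ t, HasDerivAt p (p' t) t) (hp' : Continuous p')
    (hy : ∀ t, HasDerivAt y (y' t) t) (hy' : ∀ t, HasDerivAt y' (y'' t) t)
    (hode : ∀ t, y'' t - V t * y' t + κ t * y t = 0)
    (z Q κp : ℝ → ℝ)
    (hz : ∀ t, z t = y' t - p t * y t)
    (hQ : ∀ t, Q t = z t * y t)
    (hκp : ∀ t, κp t = κ t + p' t + p t * (p t - V t)) :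
    (∀ t, HasDerivAt Q (z t ^ 2 + V t * z t * y t - κp t * y t ^ 2) t) ∧
    (∀ t, κp t < 0 → Q t = 0 → (y t, z t) ≠ (0, 0) →
      0 < z t ^ 2 + V t * z t * y t - κp t * y t ^ 2) := by
  refine ⟨fun t => ?_, fun t hneg hQ0 hne => ?_⟩
  · obtain rfl : z = fun t => y' t - p t * y t := funext hz
    obtain rfl : Q = fun t => (y' t - p t * y t) * y t := funext hQ
    have hd := ((hy' t).sub ((hp t).mul (hy t))).mul (hy t)
    refine hd.congr_deriv ?_
    simp only [hκp, Pi.sub_apply, Pi.mul_apply]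
    linear_combination y t * hode t
  · rw [hQ] at hQ0
    -- On the null cone the mixed term vanishes and the two squares remain.
    have hmix : V t * z t * y t = 0 := by rw [mul_assoc, hQ0, mul_zero]
    rw [hmix]
    by_cases hy0 : y t = 0
    · have hz0 : z t ≠ 0 := fun h => hne (by rw [hy0, h])
      have := pow_pos (abs_pos.mpr hz0) 2
      rw [sq_abs] at this
      simpa [hy0] using this
    · have hy2 : 0 < y t ^ 2 := by positivity
      nlinarith [sq_nonneg (z t), mul_pos (neg_pos.mpr hneg) hy2]
end

section
/- Let κ, V : ℝ → ℝ be continuous and p : ℝ → ℝ be continuously differentiable, and set κ_p(t) := κ(t) + p'(t) + p(t)·(p(t) − V(t)). Let y : ℝ → ℝ be twice differentiable with y''(t) − V(t)·y'(t) + κ(t)·y(t) = 0 for all t, and set z(t) := y'(t) − p(t)·y(t) and Q(t) := z(t)·y(t). Then Q'(t) = (z(t) + V(t)·y(t)/2)² − (κ_p(t) + V(t)²/4)·y(t)² for all t. Consequently, if κ_p(t) + V(t)²/4 < 0 and (y(t), z(t)) ≠ (0,0), then Q'(t) > 0. -/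
/-! By the Jacobi equation, `z' = (V - p) y' - (κ + p') y`. Substituting this and `y' = z + p y` into
`Q' = z' y + z y'` gives `Q' = z² + V z y - κ_p y²`, and completing the square in `z` yields the
stated formula. Both terms of that formula are nonnegative when `κ_p + V²/4 < 0`; the second is
positive if `y ≠ 0`, and the first equals `z²` if `y = 0`. -/

/-- Scalar form of the completed-square computation in Theorem 3.6:
`Q' = (z + V y / 2)² - (κ_p + V²/4) y²`, hence `Q' > 0` away from the origin
when `κ_p + V²/4 < 0`. -/
theorem stmt_1 (κ V p p' y y' y'' : ℝ → ℝ)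
    (hκ : Continuous κ) (hV : Continuous V)
    (hp : ∀ t, HasDerivAt p (p' t) t) (hp' : Continuous p')
    (hy : ∀ t, HasDerivAt y (y' t) t) (hy' : ∀ t, HasDerivAt y' (y'' t) t)
    (hode : ∀ t, y'' t - V t * y' t + κ t * y t = 0)
    (z Q κp : ℝ → ℝ)
    (hz : ∀ t, z t = y' t - p t * y t)
    (hQ : ∀ t, Q t = z t * y t)
    (hκp : ∀ t, κp t = κ t + p' t + p t * (p t - V t)) :
    (∀ t, HasDerivAt Q ((z t + V t * y t / 2) ^ 2 - (κp t + V t ^ 2 / 4) * y t ^ 2) t) ∧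
    (∀ t, κp t + V t ^ 2 / 4 < 0 → (y t, z t) ≠ (0, 0) →
      0 < (z t + V t * y t / 2) ^ 2 - (κp t + V t ^ 2 / 4) * y t ^ 2) := by
  constructor
  · intro t
    have hQ' : Q = (y' - p * y) * y := by
      funext s
      simp [hQ, hz]
    rw [hQ']
    refine (((hy' t).sub ((hp t).mul (hy t))).mul (hy t)).congr_deriv ?_
    simp only [Pi.sub_apply, Pi.mul_apply, hz, hκp]
    -- The Jacobi equation eliminates `y''`; what remains is completing the square in `z`.
    linear_combination y t * hode t
  · intro t hneg hne
    by_cases h : y t = 0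
    · have hz0 : z t ≠ 0 := fun h0 => hne (by rw [h, h0])
      rw [h]
      simpa using pow_pos (abs_pos.mpr hz0) 2
    · have hpos : 0 < -(κp t + V t ^ 2 / 4) * y t ^ 2 :=
        mul_pos (neg_pos.mpr hneg) (by positivity)
      linarith [sq_nonneg (z t + V t * y t / 2)]
end

section
/- Let κ, V : ℝ → ℝ be continuous and p : ℝ → ℝ be continuously differentiable, and suppose κ_p(t) := κ(t) + p'(t) + p(t)·(p(t) − V(t)) satisfies κ_p(t) < 0 for all t. Let y : ℝ → ℝ be twice differentiable with y''(t) − V(t)·y'(t) + κ(t)·y(t) = 0 and (y(t), y'(t)) ≠ (0,0) for all t. If y(0) = 0, then y(t) ≠ 0 for all t ≠ 0. -/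
/-!
Put `z = y' - p y` and `Q = z y`. The equation for `y` becomes the first-order system
`y' = z + p y`, `z' = (V - p) z - κ_p y`, whence `Q' = V Q + (z² - κ_p y²)`.
The last term is positive along a non-trivial solution because `κ_p < 0`. With the integrating
factor `exp (-∫₀ᵗ V)`, the function `exp (-∫₀ᵗ V) Q` has positive derivative, so it is strictly
increasing and in particular injective. It vanishes at every zero of `y`, so `y` has at most one
zero.
-/

/-- Scalar single-orbit form of the absence of conjugate points (Remark 3.7):
if some gauge `p` makes `κ_p = κ + p' + p (p - V)` negative, then every
non-trivial solution of `y'' - V y' + κ y = 0` with `y 0 = 0` vanishes only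
at `t = 0`. -/
theorem stmt_2 (κ V p p' y y' y'' : ℝ → ℝ)
    (hκ : Continuous κ) (hV : Continuous V)
    (hp : ∀ t, HasDerivAt p (p' t) t) (hp' : Continuous p')
    (hκp : ∀ t, κ t + p' t + p t * (p t - V t) < 0)
    (hy : ∀ t, HasDerivAt y (y' t) t) (hy' : ∀ t, HasDerivAt y' (y'' t) t)
    (hode : ∀ t, y'' t - V t * y' t + κ t * y t = 0)
    (hnontriv : ∀ t, (y t, y' t) ≠ (0, 0))
    (hy0 : y 0 = 0) :
    ∀ t ≠ 0, y t ≠ 0 := by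
  intro t ht hyt
  have hG : ∀ s, HasDerivAt (fun u => ∫ x in (0 : ℝ)..u, V x) (V s) s :=
    fun s => hV.integral_hasStrictDerivAt 0 s |>.hasDerivAt
  have hW : StrictMono
      (fun s => Real.exp (-∫ x in (0 : ℝ)..s, V x) * ((y' s - p s * y s) * y s)) := by
    refine strictMono_of_hasDerivAt_pos
      (fun s => ((hG s).neg.exp).mul ((((hy' s).sub ((hp s).mul (hy s)))).mul (hy s))) ?_
    intro s
    have hpos : 0 < (y' s - p s * y s) ^ 2
        - (κ s + p' s + p s * (p s - V s)) * y s ^ 2 := by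
      by_cases h : y s = 0
      · have h' : y' s ≠ 0 := fun h' => hnontriv s (by rw [h, h'])
        simpa [h] using pow_pos (abs_pos.2 h') 2
      · have h1 := mul_neg_of_neg_of_pos (hκp s) (sq_pos_of_ne_zero h)
        linarith [sq_nonneg (y' s - p s * y s)]
    have key := mul_pos (Real.exp_pos (-∫ x in (0 : ℝ)..s, V x)) hpos
    refine key.trans_eq ?_
    have hs : y'' s = V s * y' s - κ s * y s := by linarith [hode s]
    simp only [hs, Pi.neg_apply, Pi.sub_apply, Pi.mul_apply]
    ring
  exact ht (hW.injective (by simp [hyt, hy0]))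
end

section
/- Let κ, V : ℝ → ℝ be continuous and p : ℝ → ℝ be continuously differentiable, and suppose κ_p(t) := κ(t) + p'(t) + p(t)·(p(t) − V(t)) satisfies κ_p(t) < 0 for all t. Let y : ℝ → ℝ be twice differentiable with y''(t) − V(t)·y'(t) + κ(t)·y(t) = 0 and (y(t), y'(t)) ≠ (0,0) for all t, and set Q(t) := (y'(t) − p(t)·y(t))·y(t). If Q(t₀) ≥ 0 for some t₀, then Q(t) > 0 for all t > t₀. -/
/-!
Write `z = y' - p y`, so that `Q = z y`. The equation gives `y' = z + p y` and
`z' = (V - p) z - κ_p y`, hence `Q' = V Q + z² - κ_p y²`. Since `(y, z) ≠ 0` and `κ_p < 0`,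
this says `Q' - V Q > 0` at every time. With the integrating factor `exp (-∫ V)`, the function
`exp (-∫ V) Q` is therefore strictly increasing, and it has the sign of `Q`.
-/


/-- Scalar single-orbit form of the cone-field invariance in Theorem 3.6:
if `κ_p = κ + p' + p (p - V) < 0`, then along any non-trivial solution of
`y'' - V y' + κ y = 0` the quadratic form `Q = (y' - p y) y` is strictly
positive forward in time once it is non-negative. -/
theorem stmt_3 (κ V p p' y y' y'' : ℝ → ℝ)
    (hκ : Continuous κ) (hV : Continuous V)
    (hp : ∀ t, HasDerivAt p (p' t) t) (hp' : Continuous p')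
    (hκp : ∀ t, κ t + p' t + p t * (p t - V t) < 0)
    (hy : ∀ t, HasDerivAt y (y' t) t) (hy' : ∀ t, HasDerivAt y' (y'' t) t)
    (hode : ∀ t, y'' t - V t * y' t + κ t * y t = 0)
    (hnontriv : ∀ t, (y t, y' t) ≠ (0, 0))
    (Q : ℝ → ℝ) (hQ : ∀ t, Q t = (y' t - p t * y t) * y t)
    (t₀ : ℝ) (h0 : 0 ≤ Q t₀) :
    ∀ t, t₀ < t → 0 < Q t := by
  intro t ht
  have hW : ∀ s, HasDerivAt (fun s => ∫ x in t₀..s, V x) (V s) s := fun s =>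
    intervalIntegral.integral_hasDerivAt_right (hV.intervalIntegrable _ _)
      (hV.stronglyMeasurableAtFilter _ _) hV.continuousAt
  have hQd : ∀ s, HasDerivAt Q
      (V s * Q s + ((y' s - p s * y s) ^ 2
        - (κ s + p' s + p s * (p s - V s)) * y s ^ 2)) s := by
    intro s
    rw [funext hQ]
    refine (((hy' s).sub ((hp s).mul (hy s))).mul (hy s)).congr_deriv ?_
    simp only [Pi.sub_apply, Pi.mul_apply]
    linear_combination y s * hode s
  have hpos : ∀ s, 0 < (y' s - p s * y s) ^ 2
      - (κ s + p' s + p s * (p s - V s)) * y s ^ 2 := by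
    intro s
    by_cases h : y s = 0
    · have h' : y' s ≠ 0 := fun h' => hnontriv s (by rw [h, h'])
      simp only [h]
      have := sq_pos_of_ne_zero h'
      simpa using this
    · have h1 := mul_pos (neg_pos.2 (hκp s)) (sq_pos_of_ne_zero h)
      linarith [sq_nonneg (y' s - p s * y s)]
  have hmono : StrictMono fun s => Real.exp (-∫ x in t₀..s, V x) * Q s := by
    refine strictMono_of_deriv_pos fun s => ?_
    have hd : HasDerivAt (fun s => Real.exp (-∫ x in t₀..s, V x) * Q s)
        (Real.exp (-∫ x in t₀..s, V x) * ((y' s - p s * y s) ^ 2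
          - (κ s + p' s + p s * (p s - V s)) * y s ^ 2)) s := by
      refine ((hW s).fun_neg.exp.mul (hQd s)).congr_deriv ?_
      ring
    rw [hd.deriv]
    exact mul_pos (Real.exp_pos _) (hpos s)
  have hlt := hmono ht
  have h1 : 0 ≤ Real.exp (-∫ x in t₀..t₀, V x) * Q t₀ := mul_nonneg (Real.exp_pos _).le h0
  exact (mul_pos_iff_of_pos_left (Real.exp_pos _)).1 (h1.trans_lt hlt)
end

section
/- For every C ≥ 0 and ε > 0 there exists δ > 0 with the following property. Let κ, V : ℝ → ℝ be continuous and p : ℝ → ℝ be continuously differentiable such that |V(t)| ≤ C and κ(t) + p'(t) + p(t)·(p(t) − V(t)) + V(t)²/4 ≤ −ε² for all t. Then every twice differentiable y : ℝ → ℝ with y''(t) − V(t)·y'(t) + κ(t)·y(t) = 0 satisfies Q(t₁) ≥ e^{δ(t₁ − t₀)}·Q(t₀) for all t₀ ≤ t₁, where Q(t) := (y'(t) − p(t)·y(t))·y(t). -/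
/-!
Put `z = y' - p y`, so that `Q = z y`. The Jacobi equation gives
`Q' = z² + V z y - (κ + p' + p (p - V)) y²`, and the curvature hypothesis together with completing
the square yields `Q' ≥ w² + ε² y²` for `w = z + V y / 2`. Since `Q = w y - V y² / 2` and `|V| ≤ C`,
this dominates `δ Q` as soon as `δ² / 4 + δ C / 2 ≤ ε²`, for instance for `δ = ε² / (ε + C)`.
Hence `exp (-δ t) Q(t)` is nondecreasing, whatever the sign of `Q`.
-/

/-- The right-hand side is the derivative of `z y` along the Jacobi equation when `k` stands for
`κ + p' + p (p - V)`. -/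
theorem mul_le_of_deriv_lower_bound {δ ε C V k y z : ℝ} (hδ : 0 ≤ δ)
    (hδε : δ ^ 2 / 4 + δ * C / 2 ≤ ε ^ 2) (hV : |V| ≤ C) (hk : k + V ^ 2 / 4 ≤ -ε ^ 2) :
    δ * (z * y) ≤ z ^ 2 + V * (z * y) - k * y ^ 2 := by
  have h₁ : (k + V ^ 2 / 4 + ε ^ 2) * y ^ 2 ≤ 0 :=
    mul_nonpos_of_nonpos_of_nonneg (by linarith) (sq_nonneg y)
  have h₂ : 0 ≤ (ε ^ 2 - δ ^ 2 / 4 - δ * C / 2) * y ^ 2 :=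
    mul_nonneg (by linarith) (sq_nonneg y)
  have h₃ : 0 ≤ δ * (C + V) * y ^ 2 :=
    mul_nonneg (mul_nonneg hδ (by linarith [(abs_le.mp hV).1])) (sq_nonneg y)
  nlinarith [sq_nonneg (z + V * y / 2 - δ * y / 2)]

/-- One-sided Grönwall bound from below, with no sign condition on `Q`. -/
theorem exp_mul_le_of_mul_le_deriv {δ : ℝ} {Q Q' : ℝ → ℝ} (hQ : ∀ t, HasDerivAt Q (Q' t) t)
    (h : ∀ t, δ * Q t ≤ Q' t) {t₀ t₁ : ℝ} (ht : t₀ ≤ t₁) :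
    Real.exp (δ * (t₁ - t₀)) * Q t₀ ≤ Q t₁ := by
  have hd (t : ℝ) : HasDerivAt (fun s => Real.exp (-δ * s) * Q s)
      (Real.exp (-δ * t) * (Q' t - δ * Q t)) t := by
    refine ((((hasDerivAt_id' t).const_mul (-δ)).exp).mul (hQ t)).congr_deriv ?_
    ring
  have hmono : Monotone fun s => Real.exp (-δ * s) * Q s :=
    monotone_of_deriv_nonneg (fun t => (hd t).differentiableAt) fun t => by
      rw [(hd t).deriv]
      exact mul_nonneg (Real.exp_pos _).le (sub_nonneg.mpr (h t))
  calc Real.exp (δ * (t₁ - t₀)) * Q t₀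
      = Real.exp (δ * t₁) * (Real.exp (-δ * t₀) * Q t₀) := by
        rw [← mul_assoc, ← Real.exp_add]
        ring_nf
    _ ≤ Real.exp (δ * t₁) * (Real.exp (-δ * t₁) * Q t₁) :=
        mul_le_mul_of_nonneg_left (hmono ht) (Real.exp_pos _).le
    _ = Q t₁ := by
        rw [← mul_assoc, ← Real.exp_add]
        simp

/-- Quantitative scalar form of the hyperbolicity mechanism in Theorem 3.6:
if `|V| ≤ C` and `κ_p + V²/4 ≤ -ε²`, the quadratic form
`Q = (y' - p y) y` grows at a uniform exponential rate `δ = δ(C, ε)` along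
solutions of the Jacobi equation `y'' - V y' + κ y = 0`. -/
theorem stmt_4 (C ε : ℝ) (hC : 0 ≤ C) (hε : 0 < ε) :
    ∃ δ > 0, ∀ (κ V p p' y y' y'' : ℝ → ℝ),
      Continuous κ → Continuous V →
      (∀ t, HasDerivAt p (p' t) t) → Continuous p' →
      (∀ t, |V t| ≤ C) →
      (∀ t, κ t + p' t + p t * (p t - V t) + V t ^ 2 / 4 ≤ -ε ^ 2) →
      (∀ t, HasDerivAt y (y' t) t) → (∀ t, HasDerivAt y' (y'' t) t) →
      (∀ t, y'' t - V t * y' t + κ t * y t = 0) →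
      ∀ t₀ t₁, t₀ ≤ t₁ →
        Real.exp (δ * (t₁ - t₀)) * ((y' t₀ - p t₀ * y t₀) * y t₀) ≤
          (y' t₁ - p t₁ * y t₁) * y t₁ := by
  have hs : 0 < ε + C := by linarith
  have hδ : 0 < ε ^ 2 / (ε + C) := by positivity
  refine ⟨ε ^ 2 / (ε + C), hδ, ?_⟩
  intro κ V p p' y y' y'' _ _ hp _ hV hκ hy hy' hJ t₀ t₁ ht
  have hδs : ε ^ 2 / (ε + C) * (ε + C) = ε ^ 2 := div_mul_cancel₀ _ hs.ne'
  generalize ε ^ 2 / (ε + C) = δ at hδ hδs ⊢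
  have hδε : δ ≤ ε := by nlinarith [mul_nonneg hε.le hC]
  have hsmall : δ ^ 2 / 4 + δ * C / 2 ≤ ε ^ 2 := by
    nlinarith [mul_nonneg hδ.le hC, mul_nonneg hδ.le hε.le,
      mul_nonneg hδ.le (sub_nonneg.mpr hδε)]
  refine exp_mul_le_of_mul_le_deriv (Q := fun t => (y' t - p t * y t) * y t)
    (fun t => ((hy' t).sub ((hp t).mul (hy t))).mul (hy t)) (fun t => ?_) ht
  refine (mul_le_of_deriv_lower_bound hδ.le hsmall (hV t) (hκ t)).trans (le_of_eq ?_)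
  simp only [Pi.sub_apply, Pi.mul_apply]
  linear_combination -y t * hJ t
end
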